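/- arXiv:2509.25908 — 3 statements merged into one kernel-verified Lean document; each statement's English description precedes it below -/
import Mathlib

section
/- Let μ be a σ-finite measure on ℝ and let f_i, f_j, f_k be probability densities with respect to μ with f_k > 0 μ-almost everywhere. Let τ be a natural number, c > 0 a real number, and R a measurable subset of ℝ^τ such that for every x = (x_1,…,x_τ) ∈ R one has ∏_{t=1}^τ f_k(x_t) ≤ c · ∏_{t=1}^τ f_j(x_t). Then ∫_R ∏_{t=1}^τ f_i(x_t) d(μ^⊗τ)(x) ≤ c · ( ∫ f_i(x) · (f_j(x)/f_k(x)) dμ(x) )^τ. -/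
open MeasureTheory ENNReal

/-!
On `R` the likelihood ratio of `fj` against `fk` is at least `1 / c`, so inserting `c` times that
ratio into the integral only increases it; the enlarged integrand is a product over the samples,
and Tonelli's theorem factors its integral over the whole space.
-/

section PiMeasure

variable {ι : Type*} [Fintype ι] {E : ι → Type*} {mE : ∀ i, MeasurableSpace (E i)}
  {μ : ∀ i, Measure (E i)} [∀ i, SigmaFinite (μ i)]

theorem ae_pi_forall_eval {p : ∀ i, E i → Prop} (hp : ∀ i, ∀ᵐ x ∂μ i, p i x) :
    ∀ᵐ x ∂Measure.pi μ, ∀ i, p i (x i) :=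
  ae_all_iff.2 fun i ↦ (Measure.quasiMeasurePreserving_eval μ i).ae (hp i)

theorem aemeasurable_pi_prod_eval {M : Type*} [CommMonoid M] [MeasurableSpace M]
    [MeasurableMul₂ M] {f : ∀ i, E i → M} (hf : ∀ i, AEMeasurable (f i) (μ i)) :
    AEMeasurable (fun x ↦ ∏ i, f i (x i)) (Measure.pi μ) :=
  Finset.aemeasurable_fun_prod _ fun i _ ↦
    (hf i).comp_quasiMeasurePreserving (Measure.quasiMeasurePreserving_eval μ i)

theorem lintegral_fin_nat_prod_eq_prod {n : ℕ} {F : Fin n → Type*}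
    {mF : ∀ i, MeasurableSpace (F i)} {ν : ∀ i, Measure (F i)} [∀ i, SigmaFinite (ν i)]
    {f : ∀ i, F i → ℝ≥0∞} (hf : ∀ i, AEMeasurable (f i) (ν i)) :
    ∫⁻ x, ∏ i, f i (x i) ∂Measure.pi ν = ∏ i, ∫⁻ x, f i x ∂ν i := by
  induction n with
  | zero => simp
  | succ n ih =>
    have tail_measurable := aemeasurable_pi_prod_eval fun i : Fin n ↦ hf i.succ
    calc ∫⁻ x, ∏ i, f i (x i) ∂Measure.pi ν
        = ∫⁻ z : F 0 × (∀ i : Fin n, F i.succ), f 0 z.1 * ∏ i, f (Fin.succ i) (z.2 i)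
            ∂(ν 0).prod (Measure.pi fun i ↦ ν i.succ) := by
          simp_rw [Fin.prod_univ_succ]
          exact (measurePreserving_piFinSuccAbove ν 0).lintegral_comp_emb
            (MeasurableEquiv.measurableEmbedding _) fun z ↦ f 0 z.1 * ∏ i, f (Fin.succ i) (z.2 i)
      _ = (∫⁻ x, f 0 x ∂ν 0) * ∏ i : Fin n, ∫⁻ x, f i.succ x ∂ν i.succ := by
          rw [lintegral_prod_mul (hf 0) tail_measurable, ih fun i ↦ hf i.succ]
      _ = ∏ i, ∫⁻ x, f i x ∂ν i := by rw [Fin.prod_univ_succ]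

theorem lintegral_fintype_prod_eq_prod {f : ∀ i, E i → ℝ≥0∞}
    (hf : ∀ i, AEMeasurable (f i) (μ i)) :
    ∫⁻ x, ∏ i, f i (x i) ∂Measure.pi μ = ∏ i, ∫⁻ x, f i x ∂μ i := by
  let e := (Fintype.equivFin ι).symm
  rw [← (measurePreserving_piCongrLeft μ e).lintegral_comp_emb
    (MeasurableEquiv.measurableEmbedding _)]
  simp_rw [← e.prod_comp, MeasurableEquiv.coe_piCongrLeft, Equiv.piCongrLeft_apply_apply]
  exact lintegral_fin_nat_prod_eq_prod fun i ↦ hf (e i)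

end PiMeasure

theorem setLIntegral_le_const_mul_lintegral_mul_div {α : Type*} {mα : MeasurableSpace α}
    {μ : Measure α} {p q r : α → ℝ≥0∞} {c : ℝ≥0∞} {R : Set α}
    (hp : AEMeasurable p μ) (hq : AEMeasurable q μ) (hr : AEMeasurable r μ)
    (hr_zero : ∀ᵐ x ∂μ, r x ≠ 0) (hr_top : ∀ᵐ x ∂μ, r x ≠ ∞)
    (hdom : ∀ᵐ x ∂μ, x ∈ R → r x ≤ c * q x) :
    ∫⁻ x in R, p x ∂μ ≤ c * ∫⁻ x, p x * (q x / r x) ∂μ := by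
  have hpqr : AEMeasurable (fun x ↦ p x * (q x / r x)) μ := hp.mul (hq.div hr)
  have p_le : ∀ᵐ x ∂μ, x ∈ R → p x ≤ c * (p x * (q x / r x)) := by
    filter_upwards [hr_zero, hr_top, hdom] with x hx_zero hx_top hx_dom hxR
    calc p x = p x * (r x / r x) := by rw [ENNReal.div_self hx_zero hx_top, mul_one]
      _ ≤ p x * (c * q x / r x) := by gcongr; exact hx_dom hxR
      _ = c * (p x * (q x / r x)) := by rw [mul_div_assoc, mul_left_comm]
  calc ∫⁻ x in R, p x ∂μ
      ≤ ∫⁻ x in R, c * (p x * (q x / r x)) ∂μ :=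
        setLIntegral_mono_ae (hpqr.const_mul c).restrict p_le
    _ ≤ ∫⁻ x, c * (p x * (q x / r x)) ∂μ := setLIntegral_le_lintegral R _
    _ = c * ∫⁻ x, p x * (q x / r x) ∂μ := lintegral_const_mul'' c hpqr

theorem change_of_measure_error_bound_general {ι : Type*} [Fintype ι] {E : ι → Type*}
    {mE : ∀ t, MeasurableSpace (E t)} {μ : ∀ t, Measure (E t)} [∀ t, SigmaFinite (μ t)]
    {fi fj fk : ∀ t, E t → ℝ≥0∞} (hfi : ∀ t, AEMeasurable (fi t) (μ t))
    (hfj : ∀ t, AEMeasurable (fj t) (μ t)) (hfk : ∀ t, AEMeasurable (fk t) (μ t))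
    (hfk_zero : ∀ t, ∀ᵐ x ∂μ t, fk t x ≠ 0) (hfk_top : ∀ t, ∀ᵐ x ∂μ t, fk t x ≠ ∞)
    {c : ℝ≥0∞} {R : Set (∀ t, E t)}
    (hdom : ∀ᵐ x ∂Measure.pi μ, x ∈ R → ∏ t, fk t (x t) ≤ c * ∏ t, fj t (x t)) :
    ∫⁻ x in R, ∏ t, fi t (x t) ∂Measure.pi μ ≤
      c * ∏ t, ∫⁻ x, fi t x * (fj t x / fk t x) ∂μ t := by
  have zero_ae := ae_pi_forall_eval hfk_zero
  have top_ae := ae_pi_forall_eval hfk_top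
  have prod_ratio : ∀ᵐ x ∂Measure.pi μ,
      (∏ t, fi t (x t)) * ((∏ t, fj t (x t)) / ∏ t, fk t (x t)) =
        ∏ t, fi t (x t) * (fj t (x t) / fk t (x t)) := by
    filter_upwards [top_ae] with x hx
    rw [← ENNReal.prod_div_distrib_of_ne_top fun t _ ↦ hx t, Finset.prod_mul_distrib]
  have ratio_measurable (t : ι) : AEMeasurable (fun x ↦ fi t x * (fj t x / fk t x)) (μ t) :=
    (hfi t).mul ((hfj t).div (hfk t))
  rw [← lintegral_fintype_prod_eq_prod ratio_measurable, ← lintegral_congr_ae prod_ratio]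
  exact setLIntegral_le_const_mul_lintegral_mul_div (aemeasurable_pi_prod_eval hfi)
    (aemeasurable_pi_prod_eval hfj) (aemeasurable_pi_prod_eval hfk)
    (zero_ae.mono fun x hx ↦ Finset.prod_ne_zero_iff.2 fun t _ ↦ hx t)
    (top_ae.mono fun x hx ↦ ENNReal.prod_ne_top fun t _ ↦ hx t) hdom

/-- Change-of-measure bound: if on the decision region `R ⊆ ℝ^τ` the product
density of `f_k` is at most `c` times that of `f_j`, then the probability of
`R` under i.i.d. samples from `f_i` is at most
`c · (∫ f_i · (f_j / f_k) dμ)^τ`. -/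
theorem change_of_measure_error_bound
    (μ : Measure ℝ) [SigmaFinite μ] (fi fj fk : ℝ → ℝ≥0∞)
    (hfi_meas : Measurable fi) (hfj_meas : Measurable fj) (hfk_meas : Measurable fk)
    (hfi_prob : ∫⁻ x, fi x ∂μ = 1)
    (hfj_prob : ∫⁻ x, fj x ∂μ = 1)
    (hfk_prob : ∫⁻ x, fk x ∂μ = 1)
    (hfk_pos : ∀ᵐ x ∂μ, 0 < fk x)
    (τ : ℕ) (c : ℝ) (hc : 0 < c)
    (R : Set (Fin τ → ℝ)) (hR : MeasurableSet R)
    (hdom : ∀ x ∈ R, ∏ t, fk (x t) ≤ ENNReal.ofReal c * ∏ t, fj (x t)) :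
    ∫⁻ x in R, ∏ t, fi (x t) ∂(Measure.pi fun _ : Fin τ => μ) ≤
      ENNReal.ofReal c * (∫⁻ x, fi x * (fj x / fk x) ∂μ) ^ τ := by
  have hfk_top : ∀ᵐ x ∂μ, fk x ≠ ∞ :=
    (ae_lt_top hfk_meas (by simp [hfk_prob])).mono fun _ ↦ ne_of_lt
  simpa using change_of_measure_error_bound_general (ι := Fin τ) (μ := fun _ ↦ μ)
    (fun _ ↦ hfi_meas.aemeasurable) (fun _ ↦ hfj_meas.aemeasurable)
    (fun _ ↦ hfk_meas.aemeasurable) (fun _ ↦ hfk_pos.mono fun _ ↦ ne_of_gt) (fun _ ↦ hfk_top)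
    (ae_of_all _ hdom)
end

section
/- Let λ_i, λ_j, λ_k > 0 with λ_i + λ_j > λ_k, and let f_λ denote the density of the exponential distribution with rate λ. Then ∫₀^∞ (f_{λ_j}(x)/f_{λ_k}(x)) · f_{λ_i}(x) dx ≤ 1 if and only if (λ_i − λ_k)·(λ_j − λ_k) ≤ 0. -/
open MeasureTheory

/-- Density of the exponential distribution with rate `l`. -/
noncomputable def expDensity (l x : ℝ) : ℝ :=
  if 0 ≤ x then l * Real.exp (-(l * x)) else 0

/-!
The integrand is a constant multiple of the exponential density with rate `λ_i + λ_j - λ_k`, so the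
integral equals `λ_i λ_j / (λ_k (λ_i + λ_j - λ_k))`, whose numerator exceeds its denominator by
exactly `(λ_i - λ_k) (λ_j - λ_k)`.
-/

theorem expDensity_of_nonneg (l : ℝ) {x : ℝ} (hx : 0 ≤ x) :
    expDensity l x = l * Real.exp (-(l * x)) :=
  if_pos hx

theorem expDensity_of_neg (l : ℝ) {x : ℝ} (hx : x < 0) : expDensity l x = 0 :=
  if_neg hx.not_ge

theorem setIntegral_Ioi_expDensity {l : ℝ} (hl : 0 < l) :
    ∫ x in Set.Ioi (0 : ℝ), expDensity l x = 1 :=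
  calc
    ∫ x in Set.Ioi (0 : ℝ), expDensity l x
      = ∫ x in Set.Ioi (0 : ℝ), l * Real.exp (-l * x) :=
        setIntegral_congr_fun measurableSet_Ioi fun x hx ↦ by
          simp only [expDensity_of_nonneg l (le_of_lt hx), neg_mul]
    _ = l * (-Real.exp (-l * 0) / -l) := by
        rw [integral_const_mul, integral_exp_mul_Ioi (neg_neg_of_pos hl)]
    _ = 1 := by
        rw [mul_zero, Real.exp_zero, neg_div_neg_eq, mul_one_div_cancel hl.ne']

theorem expDensity_div_mul_expDensity {a b c : ℝ} (h : a + b - c ≠ 0) (x : ℝ) :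
    expDensity b x / expDensity c x * expDensity a x =
      a * b / (c * (a + b - c)) * expDensity (a + b - c) x := by
  rcases lt_or_ge x 0 with hx | hx
  · simp only [expDensity_of_neg _ hx, mul_zero]
  · have exp_quotient : Real.exp (-((a + b - c) * x)) =
        Real.exp (-(b * x)) / Real.exp (-(c * x)) * Real.exp (-(a * x)) := by
      rw [← Real.exp_sub, ← Real.exp_add]
      ring_nf
    simp only [expDensity_of_nonneg _ hx]
    rw [exp_quotient]
    field_simp

theorem setIntegral_Ioi_expDensity_div_mul_expDensity {a b c : ℝ} (h : c < a + b) :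
    ∫ x in Set.Ioi (0 : ℝ), expDensity b x / expDensity c x * expDensity a x =
      a * b / (c * (a + b - c)) := by
  have rate_pos : 0 < a + b - c := sub_pos.mpr h
  simp_rw [expDensity_div_mul_expDensity rate_pos.ne']
  rw [integral_const_mul, setIntegral_Ioi_expDensity rate_pos, mul_one]

/-- For exponential densities with rates `λ_i, λ_j, λ_k` with
`λ_i + λ_j > λ_k`, the clustering condition `E_{f_i}[f_j/f_k] ≤ 1` holds if and
only if `(λ_i − λ_k)(λ_j − λ_k) ≤ 0`. -/
theorem exp_clustering_condition_iff
    (li lj lk : ℝ) (hli : 0 < li) (hlj : 0 < lj) (hlk : 0 < lk)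
    (hsum : lk < li + lj) :
    (∫ x in Set.Ioi (0 : ℝ),
        (expDensity lj x / expDensity lk x) * expDensity li x ≤ 1) ↔
      (li - lk) * (lj - lk) ≤ 0 := by
  have denom_pos : 0 < lk * (li + lj - lk) := mul_pos hlk (sub_pos.mpr hsum)
  have excess : li * lj - lk * (li + lj - lk) = (li - lk) * (lj - lk) := by ring
  rw [setIntegral_Ioi_expDensity_div_mul_expDensity hsum, div_le_one denom_pos, ← sub_nonpos,
    excess]
end

section
/- Let μ_i, μ_j, μ_k be real numbers and let φ_μ denote the density of the normal distribution with mean μ and unit variance. Then ∫_ℝ (φ_{μ_j}(x)/φ_{μ_k}(x)) · φ_{μ_i}(x) dx ≤ 1 if and only if (μ_j − μ_k)·(μ_i − μ_k) ≤ 0. In particular, if min(μ_i, μ_j) ≤ μ_k ≤ max(μ_i, μ_j), then the clustering condition ∫ (φ_{μ_j}/φ_{μ_k})·φ_{μ_i} dx ≤ 1 holds. -/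
open MeasureTheory

/-- Density of the normal distribution with mean `m` and unit variance. -/
noncomputable def normalDensity (m x : ℝ) : ℝ :=
  (Real.sqrt (2 * Real.pi))⁻¹ * Real.exp (-(x - m) ^ 2 / 2)

open ProbabilityTheory
open scoped NNReal

theorem normalDensity_eq_gaussianPDFReal (m : ℝ) : normalDensity m = gaussianPDFReal m 1 := by
  ext x
  simp [normalDensity, gaussianPDFReal]

theorem sub_mul_sub_nonpos_iff_mem_uIcc {R : Type*} [Ring R] [LinearOrder R]
    [IsStrictOrderedRing R] {a b c : R} : (a - c) * (b - c) ≤ 0 ↔ c ∈ Set.uIcc a b := by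
  rw [mul_nonpos_iff, Set.mem_uIcc, sub_nonneg, sub_nonpos, sub_nonpos, sub_nonneg,
    and_comm (a := c ≤ a), or_comm]

section GaussianPDF

variable {v : ℝ≥0}

theorem gaussianPDFReal_div_mul_gaussianPDFReal (hv : v ≠ 0) (a b c x : ℝ) :
    gaussianPDFReal a v x / gaussianPDFReal c v x * gaussianPDFReal b v x =
      Real.exp ((a - c) * (b - c) / v) * gaussianPDFReal (a + b - c) v x := by
  have normalization_ne_zero : (√(2 * Real.pi * v))⁻¹ ≠ 0 := by positivity
  simp only [gaussianPDFReal]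
  rw [mul_div_mul_left _ _ normalization_ne_zero, ← Real.exp_sub, mul_left_comm,
    ← Real.exp_add, mul_left_comm, ← Real.exp_add]
  -- Completing the square: `-(x - a)² + (x - c)² - (x - b)²` equals
  -- `2 (a - c) (b - c) - (x - (a + b - c))²`.
  congr 2
  field

theorem integral_gaussianPDFReal_div_mul_gaussianPDFReal (hv : v ≠ 0) (a b c : ℝ) :
    ∫ x, gaussianPDFReal a v x / gaussianPDFReal c v x * gaussianPDFReal b v x =
      Real.exp ((a - c) * (b - c) / v) := by
  simp_rw [gaussianPDFReal_div_mul_gaussianPDFReal hv]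
  rw [integral_const_mul, integral_gaussianPDFReal_eq_one _ hv, mul_one]

theorem integral_gaussianPDFReal_div_mul_gaussianPDFReal_le_one_iff (hv : v ≠ 0) (a b c : ℝ) :
    ∫ x, gaussianPDFReal a v x / gaussianPDFReal c v x * gaussianPDFReal b v x ≤ 1 ↔
      (a - c) * (b - c) ≤ 0 := by
  have v_pos : (0 : ℝ) < v := by positivity
  rw [integral_gaussianPDFReal_div_mul_gaussianPDFReal hv, Real.exp_le_one_iff,
    div_le_iff₀ v_pos, zero_mul]

end GaussianPDF

theorem normal_clustering_condition_general {v : ℝ≥0} (hv : v ≠ 0) (mi mj mk : ℝ) :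
    ((∫ x, gaussianPDFReal mj v x / gaussianPDFReal mk v x * gaussianPDFReal mi v x) ≤ 1 ↔
      (mj - mk) * (mi - mk) ≤ 0) ∧
    (min mi mj ≤ mk → mk ≤ max mi mj →
      (∫ x, gaussianPDFReal mj v x / gaussianPDFReal mk v x * gaussianPDFReal mi v x) ≤ 1) := by
  have condition_iff := integral_gaussianPDFReal_div_mul_gaussianPDFReal_le_one_iff hv mj mi mk
  refine ⟨condition_iff, fun min_le le_max => condition_iff.2 ?_⟩
  rw [sub_mul_sub_nonpos_iff_mem_uIcc, Set.uIcc_comm]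
  exact ⟨min_le, le_max⟩

/-- For unit-variance normal densities with means `μ_i, μ_j, μ_k`, the
clustering condition `E_{φ_i}[φ_j/φ_k] ≤ 1` holds if and only if
`(μ_j − μ_k)(μ_i − μ_k) ≤ 0`; in particular it holds whenever
`min(μ_i, μ_j) ≤ μ_k ≤ max(μ_i, μ_j)`. -/
theorem normal_clustering_condition (mi mj mk : ℝ) :
    ((∫ x : ℝ, (normalDensity mj x / normalDensity mk x) * normalDensity mi x) ≤ 1 ↔
      (mj - mk) * (mi - mk) ≤ 0) ∧
    (min mi mj ≤ mk → mk ≤ max mi mj →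
      (∫ x : ℝ, (normalDensity mj x / normalDensity mk x) * normalDensity mi x) ≤ 1) := by
  simp only [normalDensity_eq_gaussianPDFReal]
  exact normal_clustering_condition_general one_ne_zero mi mj mk
end
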